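/- arXiv:2410.05539 — 10 statements merged into one kernel-verified Lean document; each statement's English description precedes it below -/
import Mathlib

section
/- Let 0 < d < ρ < 1. There exists a unique x̄ ∈ (0,u) solving G(x̄) = −((1−ρ)d)/((1−d)ρ) + 1. Moreover, this solution x̄ is strictly increasing in ρ (for fixed d) and strictly decreasing in d (for fixed ρ). -/
open Set MeasureTheory intervalIntegral

/-- Under Assumption 1 on the income distribution with support [0,u)
(u ∈ (0,∞], encoded as `u : EReal`), for any 0 < d < ρ < 1 there exists a unique
x̄ ∈ (0,u) solving G(x̄) = 1 − ((1−ρ)d)/((1−d)ρ); moreover x̄ is strictly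
increasing in ρ and strictly decreasing in d. -/
theorem stmt_1 (u : EReal) (hu : 0 < u)
    (f : ℝ → ℝ) (hf_cont : Continuous f)
    (hf_pos : ∀ x : ℝ, 0 < x → (x : EReal) < u → 0 < f x)
    (hf_zero : ∀ x : ℝ, x ≤ 0 ∨ u ≤ (x : EReal) → f x = 0)
    (hf_prob : ∫ t : ℝ, f t = 1)
    (F : ℝ → ℝ) (hF : ∀ x : ℝ, F x = ∫ t in (0:ℝ)..x, f t)
    (hF_lt : ∀ x : ℝ, (x : EReal) < u → F x < 1)
    (G : ℝ → ℝ) (hG : ∀ x : ℝ, G x = x * f x / (1 - F x))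
    -- Assumption 1:
    (hG_mono : StrictMonoOn G {x : ℝ | 0 ≤ x ∧ (x : EReal) < u})
    (hG_zero : G 0 = 0)
    (hG_lim : ∀ c : ℝ, c < 1 → ∃ x : ℝ, 0 ≤ x ∧ (x : EReal) < u ∧ c < G x) :
    (∀ d ρ : ℝ, 0 < d → d < ρ → ρ < 1 →
      ∃! x : ℝ, (0 < x ∧ (x : EReal) < u) ∧
        G x = 1 - ((1 - ρ) * d) / ((1 - d) * ρ)) ∧
    -- strictly increasing in ρ (d fixed):
    (∀ d ρ₁ ρ₂ x₁ x₂ : ℝ, 0 < d → d < ρ₁ → ρ₁ < ρ₂ → ρ₂ < 1 →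
      (0 < x₁ ∧ (x₁ : EReal) < u) → G x₁ = 1 - ((1 - ρ₁) * d) / ((1 - d) * ρ₁) →
      (0 < x₂ ∧ (x₂ : EReal) < u) → G x₂ = 1 - ((1 - ρ₂) * d) / ((1 - d) * ρ₂) →
      x₁ < x₂) ∧
    -- strictly decreasing in d (ρ fixed):
    (∀ ρ d₁ d₂ x₁ x₂ : ℝ, 0 < d₁ → d₁ < d₂ → d₂ < ρ → ρ < 1 →
      (0 < x₁ ∧ (x₁ : EReal) < u) → G x₁ = 1 - ((1 - ρ) * d₁) / ((1 - d₁) * ρ) →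
      (0 < x₂ ∧ (x₂ : EReal) < u) → G x₂ = 1 - ((1 - ρ) * d₂) / ((1 - d₂) * ρ) →
      x₂ < x₁) := by
  have key : ∀ x₁ x₂ : ℝ, (0 < x₁ ∧ (x₁ : EReal) < u) → (0 < x₂ ∧ (x₂ : EReal) < u) →
      G x₁ < G x₂ → x₁ < x₂ := fun x₁ x₂ h₁ h₂ h =>
    (hG_mono.lt_iff_lt ⟨h₁.1.le, h₁.2⟩ ⟨h₂.1.le, h₂.2⟩).1 h
  refine ⟨?_, ?_, ?_⟩
  · intro d ρ hd hdρ hρ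
    have hden : 0 < (1 - d) * ρ := mul_pos (by linarith) (by linarith)
    have hnum : 0 < (1 - ρ) * d := mul_pos (by linarith) hd
    have hq0 : 0 < ((1 - ρ) * d) / ((1 - d) * ρ) := div_pos hnum hden
    have hq1 : ((1 - ρ) * d) / ((1 - d) * ρ) < 1 := by
      rw [div_lt_one hden]; nlinarith
    generalize ((1 - ρ) * d) / ((1 - d) * ρ) = q at hq0 hq1
    obtain ⟨y, hy0, hyu, hy⟩ := hG_lim (1 - q) (by linarith)
    have hlt : ∀ x ∈ Icc (0:ℝ) y, (x : EReal) < u := fun x hx =>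
      lt_of_le_of_lt (EReal.coe_le_coe_iff.2 hx.2) hyu
    have hFc : Continuous F := by
      have : F = fun x => ∫ t in (0:ℝ)..x, f t := funext hF
      rw [this]
      exact intervalIntegral.continuous_primitive
        (fun a b => hf_cont.intervalIntegrable a b) 0
    have hGc : ContinuousOn G (Icc 0 y) := by
      have : G = fun x => x * f x / (1 - F x) := funext hG
      rw [this]
      refine ContinuousOn.div (by fun_prop) (by fun_prop) ?_
      intro x hx
      have := hF_lt x (hlt x hx)
      linarith
    obtain ⟨x, hx, hxq⟩ := intermediate_value_Icc hy0 hGc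
      (show (1 - q) ∈ Icc (G 0) (G y) from ⟨by rw [hG_zero]; linarith, hy.le⟩)
    have hx0 : 0 < x := by
      rcases hx.1.lt_or_eq with h | h
      · exact h
      · rw [← h, hG_zero] at hxq; linarith
    refine ⟨x, ⟨⟨hx0, hlt x hx⟩, hxq⟩, ?_⟩
    rintro z ⟨⟨hz0, hzu⟩, hz⟩
    exact hG_mono.injOn ⟨hz0.le, hzu⟩ ⟨hx0.le, hlt x hx⟩ (hz.trans hxq.symm)
  · intro d ρ₁ ρ₂ x₁ x₂ hd h1 h12 h2 hx₁ e₁ hx₂ e₂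
    apply key _ _ hx₁ hx₂
    rw [e₁, e₂]
    apply sub_lt_sub_left
    have hd1 : 0 < 1 - d := by linarith
    rw [div_lt_div_iff₀ (mul_pos hd1 (by linarith)) (mul_pos hd1 (by linarith))]
    have := mul_pos (mul_pos hd hd1) (sub_pos.2 h12)
    nlinarith
  · intro ρ d₁ d₂ x₁ x₂ hd h12 h2 hρ hx₁ e₁ hx₂ e₂
    apply key _ _ hx₂ hx₁
    rw [e₁, e₂]
    apply sub_lt_sub_left
    have hr : 0 < ρ := by linarith
    rw [div_lt_div_iff₀ (mul_pos (by linarith) hr) (mul_pos (by linarith) hr)]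
    have := mul_pos (mul_pos hr (sub_pos.2 hρ)) (sub_pos.2 h12)
    nlinarith
end

section
/- Let ρ ∈ (0,1) and let s : ℝ → ℝ be continuous on [0,ρ] and twice continuously differentiable on (0,ρ) with s(0) = 0 and, for all d ∈ (0,ρ): 0 < s(d) ≤ 1, s′(d) > 0 and s″(d) < 0. Then there exists a unique d* ∈ (0,ρ) satisfying (ρ − d*)·s′(d*) + ρ·s(d*)² − s(d*) = 0 (equivalently, (1 − s(d*)d*)/(1 − s(d*)ρ) = (s(d*) + s′(d*)d*)/(ρ·s′(d*))). -/
open Set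

/-- For a demand function s which is continuous on [0,ρ], twice
continuously differentiable on (0,ρ), with s(0) = 0 and (for d ∈ (0,ρ))
0 < s(d) ≤ 1, s′(d) > 0, s″(d) < 0, there is a unique d* ∈ (0,ρ) with
(ρ − d*)·s′(d*) + ρ·s(d*)² − s(d*) = 0. -/
theorem stmt_2 (ρ : ℝ) (hρ0 : 0 < ρ) (hρ1 : ρ < 1) (s : ℝ → ℝ)
    (hcont : ContinuousOn s (Icc 0 ρ))
    (hC2 : ContDiffOn ℝ 2 s (Ioo 0 ρ))
    (hs0 : s 0 = 0)
    (hpos : ∀ d ∈ Ioo (0:ℝ) ρ, 0 < s d)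
    (hle1 : ∀ d ∈ Ioo (0:ℝ) ρ, s d ≤ 1)
    (hs' : ∀ d ∈ Ioo (0:ℝ) ρ, 0 < deriv s d)
    (hs'' : ∀ d ∈ Ioo (0:ℝ) ρ, deriv (deriv s) d < 0) :
    ∃! d : ℝ, d ∈ Ioo (0:ℝ) ρ ∧
      (ρ - d) * deriv s d + ρ * (s d) ^ 2 - s d = 0 := by
  have hopen : IsOpen (Ioo (0:ℝ) ρ) := isOpen_Ioo
  have hd1 : ∀ d ∈ Ioo (0:ℝ) ρ, HasDerivAt s (deriv s d) d := fun d hd =>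
    ((hC2.differentiableOn (by norm_num)).differentiableAt (hopen.mem_nhds hd)).hasDerivAt
  have hC1 : ContDiffOn ℝ 1 (deriv s) (Ioo 0 ρ) := by
    exact hC2.deriv_of_isOpen hopen (by norm_num)
  have hd2 : ∀ d ∈ Ioo (0:ℝ) ρ, HasDerivAt (deriv s) (deriv (deriv s) d) d := fun d hd =>
    ((hC1.differentiableOn (by norm_num)).differentiableAt (hopen.mem_nhds hd)).hasDerivAt
  set F : ℝ → ℝ := fun d => (ρ - d) * deriv s d + ρ * (s d) ^ 2 - s d with hF
  have hdF : ∀ d ∈ Ioo (0:ℝ) ρ, HasDerivAt F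
      ((ρ - d) * deriv (deriv s) d - 2 * deriv s d * (1 - ρ * s d)) d := by
    intro d hd
    have h := ((((hasDerivAt_id d).const_sub ρ).mul (hd2 d hd)).add
      (((hd1 d hd).pow 2).const_mul ρ)).sub (hd1 d hd)
    refine h.congr_deriv ?_
    simp
    ring
  have hFc : ContinuousOn F (Ioo 0 ρ) := fun d hd =>
    (hdF d hd).continuousAt.continuousWithinAt
  have hanti : StrictAntiOn F (Ioo 0 ρ) := by
    apply strictAntiOn_of_deriv_neg (convex_Ioo 0 ρ) hFc
    intro d hd
    rw [interior_Ioo] at hd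
    rw [(hdF d hd).deriv]
    have h1 : (ρ - d) * deriv (deriv s) d < 0 :=
      mul_neg_of_pos_of_neg (by linarith [hd.2]) (hs'' d hd)
    have h2 : 0 < 1 - ρ * s d := by nlinarith [hle1 d hd, hpos d hd]
    have h3 := mul_pos (hs' d hd) h2
    nlinarith
  have hanti' : StrictAntiOn (deriv s) (Ioo 0 ρ) := by
    apply strictAntiOn_of_deriv_neg (convex_Ioo 0 ρ) hC1.continuousOn
    intro d hd
    rw [interior_Ioo] at hd
    exact hs'' d hd
  have hmono : StrictMonoOn s (Ioo 0 ρ) := by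
    apply strictMonoOn_of_deriv_pos (convex_Ioo 0 ρ) hC2.continuousOn
    intro d hd
    rw [interior_Ioo] at hd
    exact hs' d hd
  have hc : ρ / 2 ∈ Ioo (0:ℝ) ρ := ⟨by linarith, by linarith⟩
  have hm := hs' _ hc
  have hk := hpos _ hc
  obtain ⟨a, ha, hac, hFa⟩ : ∃ a ∈ Ioo (0:ℝ) ρ, a ≤ ρ / 2 ∧ 0 < F a := by
    obtain ⟨δ, hδ, h⟩ := Metric.continuousOn_iff.1 hcont 0 ⟨le_rfl, hρ0.le⟩
      (ρ / 2 * deriv s (ρ / 2)) (by positivity)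
    have hx0 : 0 < min (δ / 2) (ρ / 2) := by positivity
    have hx1 := min_le_left (δ / 2) (ρ / 2)
    have hx2 := min_le_right (δ / 2) (ρ / 2)
    generalize min (δ / 2) (ρ / 2) = x at hx0 hx1 hx2
    have hx : x ∈ Ioo (0:ℝ) ρ := ⟨hx0, by linarith⟩
    refine ⟨x, hx, hx2, ?_⟩
    have h1 := h x ⟨hx0.le, hx.2.le⟩ (by
      rw [Real.dist_eq, sub_zero, abs_of_pos hx0]; linarith)
    rw [Real.dist_eq, hs0, sub_zero, abs_of_pos (hpos x hx)] at h1
    have h2 : deriv s (ρ / 2) ≤ deriv s x := hanti'.antitoneOn hx hc hx2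
    have h3 : ρ / 2 * deriv s (ρ / 2) ≤ (ρ - x) * deriv s x :=
      mul_le_mul (by linarith) h2 hm.le (by linarith)
    have h4 : 0 ≤ ρ * (s x) ^ 2 := by positivity
    simp only [hF]
    linarith
  obtain ⟨b, hb, hcb, hFb⟩ : ∃ b ∈ Ioo (0:ℝ) ρ, ρ / 2 ≤ b ∧ F b < 0 := by
    have he : 0 < s (ρ / 2) * (1 - ρ) / (2 * deriv s (ρ / 2)) :=
      div_pos (mul_pos hk (by linarith)) (by positivity)
    have hx0 := lt_min he (half_pos hρ0)
    have hx1 := min_le_left (s (ρ / 2) * (1 - ρ) / (2 * deriv s (ρ / 2))) (ρ / 2)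
    have hx2 := min_le_right (s (ρ / 2) * (1 - ρ) / (2 * deriv s (ρ / 2))) (ρ / 2)
    generalize min (s (ρ / 2) * (1 - ρ) / (2 * deriv s (ρ / 2))) (ρ / 2) = e at hx0 hx1 hx2
    have hx : ρ - e ∈ Ioo (0:ℝ) ρ := ⟨by linarith, by linarith⟩
    have hcx : ρ / 2 ≤ ρ - e := by linarith
    refine ⟨ρ - e, hx, hcx, ?_⟩
    rw [le_div_iff₀ (by positivity)] at hx1
    have h2 : deriv s (ρ - e) ≤ deriv s (ρ / 2) := hanti'.antitoneOn hc hx hcx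
    have h3 : s (ρ / 2) ≤ s (ρ - e) := hmono.monotoneOn hc hx hcx
    have h4 : e * deriv s (ρ - e) ≤ e * deriv s (ρ / 2) :=
      mul_le_mul_of_nonneg_left h2 hx0.le
    have h5 : ρ * s (ρ - e) ≤ ρ := by nlinarith [hle1 _ hx]
    have h6 : s (ρ / 2) * (1 - ρ) ≤ s (ρ - e) * (1 - ρ * s (ρ - e)) :=
      mul_le_mul h3 (by linarith) (by linarith) (hpos _ hx).le
    have h7 : 0 < s (ρ / 2) * (1 - ρ) := mul_pos hk (by linarith)
    simp only [hF, sub_sub_cancel]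
    nlinarith
  obtain ⟨d, hd, hd0⟩ := intermediate_value_Icc' (hac.trans hcb)
    (hFc.mono (fun x hx => ⟨ha.1.trans_le hx.1, hx.2.trans_lt hb.2⟩)) ⟨hFb.le, hFa.le⟩
  have hdI : d ∈ Ioo (0:ℝ) ρ := ⟨ha.1.trans_le hd.1, hd.2.trans_lt hb.2⟩
  refine ⟨d, ⟨hdI, hd0⟩, ?_⟩
  rintro y ⟨hy, hy0⟩
  exact hanti.injOn hy hdI (Eq.trans (b := (0:ℝ)) hy0 hd0.symm)
end

section
/- Let ρ ∈ (0,1). For each α ∈ (0,1), the equation ρ·(α + d^{α+1}) = (α+1)·d has a unique solution d*(α) ∈ (0,ρ), and the map α ↦ d*(α) is strictly increasing on (0,1): if 0 < α₁ < α₂ < 1 then d*(α₁) < d*(α₂). -/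
lemma aux_neg (ρ α x y : ℝ) (hρ0 : 0 < ρ) (hρ1 : ρ < 1) (ha : 0 < α) (hx : 0 < x) (hxy : x < y)
    (hy : y < ρ) (h : ρ * (α + x ^ (α + 1)) = (α + 1) * x) :
    ρ * (α + y ^ (α + 1)) < (α + 1) * y := by
  have hc := (convexOn_rpow (p := α + 1) (by linarith)).2 (x := x) (y := ρ)
    (Set.mem_Ici.2 hx.le) (Set.mem_Ici.2 hρ0.le)
  have hd : 0 < ρ - x := by linarith
  obtain ⟨t, ht⟩ : ∃ t, t = (y - x) / (ρ - x) := ⟨_, rfl⟩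
  have ht0 : 0 < t := by rw [ht]; exact div_pos (by linarith) hd
  have ht1 : t < 1 := by rw [ht, div_lt_one hd]; linarith
  have hty : (1 - t) * x + t * ρ = y := by rw [ht]; field_simp; ring
  have h2 := hc (a := 1 - t) (b := t) (by linarith) ht0.le (by ring)
  simp only [smul_eq_mul] at h2
  rw [hty] at h2
  have h3 : ρ ^ (α + 1) < 1 := Real.rpow_lt_one hρ0.le hρ1 (by linarith)
  have h4 := mul_le_mul_of_nonneg_left h2 hρ0.le
  have h5 : 0 < t * ρ * (1 - ρ ^ (α + 1)) := mul_pos (mul_pos ht0 hρ0) (by linarith)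
  rw [← hty] at h4 ⊢
  linear_combination h4 + h5 + (1 - t) * h

lemma aux_pos (ρ a b d : ℝ) (hρ1 : ρ < 1) (hρ0 : 0 < ρ) (ha : 0 < a) (hab : a < b) (hd : 0 < d)
    (h : ρ * (a + d ^ (a + 1)) = (a + 1) * d) :
    (b + 1) * d < ρ * (b + d ^ (b + 1)) := by
  have hb : 0 < b := by linarith
  obtain ⟨t, ht⟩ : ∃ t, t = a / b := ⟨_, rfl⟩
  have ht0 : 0 < t := by rw [ht]; exact div_pos ha hb
  have ht1 : t < 1 := by rw [ht, div_lt_one hb]; exact hab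
  have hta : a = t * b := by rw [ht]; field_simp
  have h1 := Real.geom_mean_le_arith_mean2_weighted (w₁ := 1 - t) (w₂ := t) (by linarith) ht0.le
    hd.le (Real.rpow_nonneg hd.le (b + 1)) (by ring)
  rw [← Real.rpow_mul hd.le, ← Real.rpow_add hd,
    show 1 - t + (b + 1) * t = a + 1 by rw [hta]; ring] at h1
  have h4 := mul_le_mul_of_nonneg_left h1 hρ0.le
  have h5 : 0 < (1 - t) * (d * (1 - ρ)) :=
    mul_pos (by linarith) (mul_pos hd (by linarith))
  refine lt_of_mul_lt_mul_left ?_ ht0.le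
  have h6 : ρ * d ^ (a + 1) = (t * b + 1) * d - ρ * (t * b) := by
    rw [← hta]; linarith
  rw [h6] at h4
  linear_combination h4 + h5

/-- For ρ ∈ (0,1), the equation ρ·(α + d^(α+1)) = (α+1)·d has a unique
solution d*(α) ∈ (0,ρ) for each α ∈ (0,1), and α ↦ d*(α) is strictly increasing. -/
theorem stmt_3 (ρ : ℝ) (hρ0 : 0 < ρ) (hρ1 : ρ < 1) :
    (∀ α : ℝ, 0 < α → α < 1 →
      ∃! d : ℝ, (0 < d ∧ d < ρ) ∧ ρ * (α + d ^ (α + 1)) = (α + 1) * d) ∧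
    (∀ α₁ α₂ d₁ d₂ : ℝ, 0 < α₁ → α₁ < α₂ → α₂ < 1 →
      (0 < d₁ ∧ d₁ < ρ) → ρ * (α₁ + d₁ ^ (α₁ + 1)) = (α₁ + 1) * d₁ →
      (0 < d₂ ∧ d₂ < ρ) → ρ * (α₂ + d₂ ^ (α₂ + 1)) = (α₂ + 1) * d₂ →
      d₁ < d₂) := by
  constructor
  · intro α ha _
    have hcont : ContinuousOn (fun d : ℝ => ρ * (α + d ^ (α + 1)) - (α + 1) * d)
        (Set.Icc 0 ρ) := by
      have := Real.continuous_rpow_const (q := α + 1) (by linarith)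
      exact Continuous.continuousOn (by fun_prop)
    have h3 : ρ ^ (α + 1) < 1 := Real.rpow_lt_one hρ0.le hρ1 (by linarith)
    have h0 : (0 : ℝ) ^ (α + 1) = 0 := Real.zero_rpow (by linarith)
    obtain ⟨d, hd, hd0⟩ := intermediate_value_Ioo' hρ0.le hcont
      (show (0 : ℝ) ∈ _ from ⟨by nlinarith, by simp only [h0]; nlinarith⟩)
    try simp only at hd0
    refine ⟨d, ⟨⟨hd.1, hd.2⟩, by linarith⟩, ?_⟩
    rintro e ⟨⟨he0, he1⟩, he⟩
    rcases lt_trichotomy e d with hlt | heq | hlt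
    · have := aux_neg ρ α e d hρ0 hρ1 ha he0 hlt hd.2 he
      linarith
    · exact heq
    · have := aux_neg ρ α d e hρ0 hρ1 ha hd.1 hlt he1 (by linarith)
      linarith
  · intro a b d e ha hab _ hd h1 he h2
    have hp := aux_pos ρ a b d hρ1 hρ0 ha hab hd.1 h1
    by_contra! hle
    rcases hle.lt_or_eq with hlt | heq
    · have := aux_neg ρ b e d hρ0 hρ1 (by linarith) he.1 hlt hd.2 h2
      linarith
    · subst heq
      linarith
end

section
/- Let 0 < d < ρ < 1. Define x̄ = (ρ−d)/(2ρ − d − dρ), a = (1/2)·(1 − d·√((ρ−d²)/(ρd²))), b = ((ρ−d)·(d·√((ρ−d²)/(ρd²)) + d − 1))/(2ρ − ρd − d), c = ((ρ−d)²·(1 − 2d + ρ − (1−ρ)·√(1 − d²/ρ)))/(2(1−ρ)(2ρ − d − ρd)²), m = d/(2ρ(1−a)), n = (ρ − d + bρ)/(2ρ(1−a)). Define J : [0,1) → ℝ by J(x) = x + (a·x² + b·x + c)/(1−x) for 0 ≤ x < x̄ and J(x) = ((1−d)/(1−ρ))·x for x̄ ≤ x < 1. Then for every x ∈ [0,1):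 J(x) = sup_{y ∈ [x,1)} ( x − d·y + ρ·((1−y)/(1−x))·J(y) ). Moreover, for x ∈ [0, x̄) the supremum is attained at y = m·x + n, which satisfies x < m·x + n ≤ x̄, with m·x + n < x̄ whenever x < x̄; and for x ∈ [x̄,1) the supremum is attained at y = x. -/
open Set

noncomputable def xbar (d ρ : ℝ) : ℝ := (ρ - d) / (2 * ρ - d - d * ρ)

noncomputable def aCoef (d ρ : ℝ) : ℝ :=
  (1 / 2) * (1 - d * Real.sqrt ((ρ - d ^ 2) / (ρ * d ^ 2)))

noncomputable def bCoef (d ρ : ℝ) : ℝ :=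
  ((ρ - d) * (d * Real.sqrt ((ρ - d ^ 2) / (ρ * d ^ 2)) + d - 1)) /
    (2 * ρ - ρ * d - d)

noncomputable def cCoef (d ρ : ℝ) : ℝ :=
  ((ρ - d) ^ 2 * (1 - 2 * d + ρ - (1 - ρ) * Real.sqrt (1 - d ^ 2 / ρ))) /
    (2 * (1 - ρ) * (2 * ρ - d - ρ * d) ^ 2)

noncomputable def mCoef (d ρ : ℝ) : ℝ := d / (2 * ρ * (1 - aCoef d ρ))

noncomputable def nCoef (d ρ : ℝ) : ℝ := (ρ - d + bCoef d ρ * ρ) / (2 * ρ * (1 - aCoef d ρ))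

/-- The value function of Theorem 2 (uniform income distribution). -/
noncomputable def Jval (d ρ : ℝ) (x : ℝ) : ℝ :=
  if x < xbar d ρ then
    x + (aCoef d ρ * x ^ 2 + bCoef d ρ * x + cCoef d ρ) / (1 - x)
  else ((1 - d) / (1 - ρ)) * x

lemma facts_aux (d ρ : ℝ) (hd : 0 < d) (hdρ : d < ρ) (hρ : ρ < 1) :
    ∃ s A k : ℝ, 0 ≤ s ∧ 0 < A ∧ d ≤ ρ * A ∧ A * (1 - ρ) = 1 - d ∧
      ρ * k = d * (1 - xbar d ρ) ∧ 1 - xbar d ρ - xbar d ρ * (1 - d) = k ∧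
      k = A * (1 - 2 * xbar d ρ) ∧ 0 < xbar d ρ ∧ xbar d ρ < 1 ∧
      0 < mCoef d ρ ∧ mCoef d ρ < 1 ∧ mCoef d ρ * d = 1 - s ∧ mCoef d ρ * (ρ * (1 + s)) = d ∧
      nCoef d ρ = xbar d ρ - mCoef d ρ * xbar d ρ ∧
      (∀ x, x < xbar d ρ → (1 - x) * Jval d ρ x = A * xbar d ρ * (1 - xbar d ρ) +
        k * (x - xbar d ρ) - (1 + s) / 2 * (x - xbar d ρ) ^ 2) ∧
      (∀ x, xbar d ρ ≤ x → Jval d ρ x = A * x) := by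
  have hρ0 : 0 < ρ := hd.trans hdρ
  have hD : 0 < 2 * ρ - d - d * ρ := by nlinarith
  have hD1 : 2 * ρ - d - d * ρ ≠ 0 := hD.ne'
  have hD2 : 2 * ρ - ρ * d - d ≠ 0 := by intro h; apply hD1; linarith
  have hD3 : 2 * ρ - d - ρ * d ≠ 0 := by intro h; apply hD1; linarith
  have h1ρ : (1 - ρ) ≠ 0 := by linarith
  have hs0 : 0 ≤ 1 - d ^ 2 / ρ := by
    rw [sub_nonneg, div_le_one hρ0]; nlinarith
  set s := Real.sqrt (1 - d ^ 2 / ρ) with hs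
  have hsn : 0 ≤ s := Real.sqrt_nonneg _
  have hss : ρ * s ^ 2 = ρ - d ^ 2 := by
    rw [hs, Real.sq_sqrt hs0]; field_simp
  have hs' : d * Real.sqrt ((ρ - d ^ 2) / (ρ * d ^ 2)) = s := by
    have : d = Real.sqrt (d ^ 2) := (Real.sqrt_sq hd.le).symm
    conv_lhs => lhs; rw [this]
    rw [← Real.sqrt_mul (sq_nonneg d), hs]
    congr 1; field_simp
  have ha : aCoef d ρ = (1 - s) / 2 := by unfold aCoef; rw [hs']; ring
  have h1a : 2 * ρ * (1 - aCoef d ρ) = ρ * (1 + s) := by rw [ha]; ring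
  have hpos : 0 < ρ * (1 + s) := by positivity
  have hm : mCoef d ρ * (ρ * (1 + s)) = d := by
    unfold mCoef; rw [h1a]; field_simp
  have hm0 : 0 < mCoef d ρ := by unfold mCoef; rw [h1a]; positivity
  have hp : xbar d ρ * (2 * ρ - d - d * ρ) = ρ - d := by
    unfold xbar; exact div_mul_cancel₀ _ hD1
  have hk : 1 - xbar d ρ - xbar d ρ * (1 - d) = d * (1 - xbar d ρ) / ρ := by
    rw [eq_div_iff hρ0.ne']; linear_combination -hp
  have hb : bCoef d ρ = xbar d ρ * (s + d - 1) := by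
    unfold bCoef xbar; rw [hs']; field_simp
    try ring
  have hmd : mCoef d ρ * d = 1 - s := by
    have : mCoef d ρ * d * (ρ * (1 + s)) = (1 - s) * (ρ * (1 + s)) := by
      linear_combination d * hm + hss
    exact mul_right_cancel₀ hpos.ne' this
  refine ⟨s, (1 - d) / (1 - ρ), d * (1 - xbar d ρ) / ρ, hsn, ?_, ?_, ?_, ?_, hk, ?_, ?_, ?_, hm0,
    ?_, hmd, hm, ?_, ?_, ?_⟩
  · apply div_pos <;> linarith
  · rw [← mul_div_assoc, le_div_iff₀ (by linarith)]; nlinarith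
  · field_simp
  · field_simp
  · rw [div_mul_eq_mul_div, div_eq_div_iff hρ0.ne' h1ρ]; linear_combination hp
  · unfold xbar; apply div_pos <;> linarith
  · unfold xbar; rw [div_lt_one hD]; nlinarith
  · by_contra h
    push Not at h
    nlinarith [mul_nonneg hρ0.le hsn]
  · have : nCoef d ρ * (ρ * (1 + s)) = (xbar d ρ - mCoef d ρ * xbar d ρ) * (ρ * (1 + s)) := by
      have : nCoef d ρ * (ρ * (1 + s)) = ρ - d + bCoef d ρ * ρ := by
        unfold nCoef; rw [h1a]; field_simp
      rw [this, hb]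
      linear_combination xbar d ρ * hm - hp
    exact mul_right_cancel₀ hpos.ne' this
  · intro x hx
    have hx1 : xbar d ρ < 1 := by unfold xbar; rw [div_lt_one hD]; nlinarith
    have hx2 : 1 - x ≠ 0 := by linarith
    have hc : cCoef d ρ = (1 - d) / (1 - ρ) * xbar d ρ * (1 - xbar d ρ)
        - d * (1 - xbar d ρ) / ρ * xbar d ρ - (1 + s) / 2 * xbar d ρ ^ 2 := by
      have hc1 : cCoef d ρ = xbar d ρ ^ 2 * (1 - 2 * d + ρ - (1 - ρ) * s) / (2 * (1 - ρ)) := by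
        have hD4 : 2 * ρ - d - ρ * d = 2 * ρ - d - d * ρ := by ring
        unfold cCoef xbar
        rw [← hs, hD4]
        generalize 2 * ρ - d - d * ρ = D at *
        rw [div_pow]
        field_simp
      rw [hc1, ← hk]
      generalize xbar d ρ = p at *
      have e1 : (1 - d) / (1 - ρ) * p * (1 - p) = 2 * ((1 - d) * p * (1 - p)) / (2 * (1 - ρ)) := by
        field_simp
      have h2 : 2 * (1 - ρ) ≠ 0 := by positivity
      have e2 := div_mul_cancel₀ (2 * ((1 - d) * p * (1 - p))) h2
      rw [e1, div_eq_iff h2]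
      linear_combination 2 * p * hp - e2
    unfold Jval
    rw [if_pos hx, hc, ← hk, mul_add, mul_div_cancel₀ _ hx2, ha, hb]
    ring
  · intro x hx
    unfold Jval
    rw [if_neg (not_lt.mpr hx)]

/-- For uniform income on [0,1], the explicitly given J solves the
Bellman equation J(x) = sup_{y∈[x,1)} ( x − d·y + ρ·((1−y)/(1−x))·J(y) ) for all
x ∈ [0,1); for x ∈ [0,x̄) the supremum is attained at y = m·x + n ∈ (x, x̄), and
for x ∈ [x̄,1) it is attained at y = x. -/
theorem stmt_6 (d ρ : ℝ) (hd : 0 < d) (hdρ : d < ρ) (hρ : ρ < 1) :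
    (∀ x ∈ Ico (0:ℝ) 1,
      IsLUB ((fun y => x - d * y + ρ * ((1 - y) / (1 - x)) * Jval d ρ y) '' Ico x 1)
        (Jval d ρ x)) ∧
    (∀ x ∈ Ico (0:ℝ) (xbar d ρ),
      x - d * (mCoef d ρ * x + nCoef d ρ) +
          ρ * ((1 - (mCoef d ρ * x + nCoef d ρ)) / (1 - x)) *
            Jval d ρ (mCoef d ρ * x + nCoef d ρ) = Jval d ρ x ∧
      x < mCoef d ρ * x + nCoef d ρ ∧ mCoef d ρ * x + nCoef d ρ < xbar d ρ) ∧
    (∀ x ∈ Ico (xbar d ρ) 1,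
      x - d * x + ρ * ((1 - x) / (1 - x)) * Jval d ρ x = Jval d ρ x) := by
  obtain ⟨s, A, k, hs, hA, hAd, hA1, hρk, hk1, hk2, hp0, hp1, hm0, hm1, hmd, hm, hn, hJ1, hJ2⟩ :=
    facts_aux d ρ hd hdρ hρ
  have hρ0 : 0 < ρ := hd.trans hdρ
  generalize xbar d ρ = p at *
  generalize mCoef d ρ = m at *
  generalize nCoef d ρ = n at *
  generalize Jval d ρ = J at *
  subst hn
  -- multiplied-out objective
  have key : ∀ x y, x < 1 → (1 - x) * (x - d * y + ρ * ((1 - y) / (1 - x)) * J y) =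
      (1 - x) * (x - d * y) + ρ * ((1 - y) * J y) := by
    intro x y hx
    have : 1 - x ≠ 0 := by linarith
    field_simp
  -- the quadratic identity
  have quad : ∀ x y, (1 - x) * (x - d * y) + ρ * (A * p * (1 - p) + k * (y - p)
      - (1 + s) / 2 * (y - p) ^ 2) = A * p * (1 - p) + k * (x - p) - (1 + s) / 2 * (x - p) ^ 2
      - ρ * ((1 + s) / 2) * (y - (m * x + (p - m * p))) ^ 2 := by
    intro x y
    have e1 : ρ * k = d * (1 - p) := hρk
    linear_combination (-(1 - p) * p) * hA1 + (y - p) * hρk + (x - p) * hk1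
      + ((x - p) ^ 2 * m / 2 - (x - p) * (y - p)) * hm + ((x - p) ^ 2 / 2) * hmd
  have part2 : ∀ x ∈ Ico (0:ℝ) p,
      x - d * (m * x + (p - m * p)) + ρ * ((1 - (m * x + (p - m * p))) / (1 - x)) *
            J (m * x + (p - m * p)) = J x ∧
      x < m * x + (p - m * p) ∧ m * x + (p - m * p) < p := by
    intro x hx
    have hxp := hx.2
    have h2 : m * x + (p - m * p) < p := by nlinarith
    refine ⟨?_, by nlinarith, h2⟩
    have hx1 : 1 - x ≠ 0 := by linarith
    apply mul_left_cancel₀ hx1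
    rw [key _ _ (by linarith), hJ1 _ h2, hJ1 _ hxp, quad]
    ring
  have part3 : ∀ x ∈ Ico p 1, x - d * x + ρ * ((1 - x) / (1 - x)) * J x = J x := by
    intro x hx
    have hx1 : 1 - x ≠ 0 := by linarith [hx.2]
    rw [div_self hx1, hJ2 x hx.1]
    linear_combination (-x) * hA1
  refine ⟨?_, part2, part3⟩
  intro x hx
  have hx1 : 0 < 1 - x := by linarith [hx.2]
  refine IsGreatest.isLUB ⟨?_, ?_⟩
  · by_cases h : x < p
    · obtain ⟨h1, h2, h3⟩ := part2 x ⟨hx.1, h⟩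
      exact ⟨_, ⟨h2.le, h3.trans hp1⟩, h1⟩
    · exact ⟨x, ⟨le_rfl, hx.2⟩, part3 x ⟨not_lt.mp h, hx.2⟩⟩
  · rintro _ ⟨y, hy, rfl⟩
    apply le_of_mul_le_mul_left _ hx1
    show (1 - x) * (x - d * y + ρ * ((1 - y) / (1 - x)) * J y) ≤ _
    rw [key _ _ hx.2]
    by_cases h : x < p
    · rw [hJ1 x h]
      by_cases h' : y < p
      · rw [hJ1 y h', quad]
        have : 0 ≤ ρ * ((1 + s) / 2) * (y - (m * x + (p - m * p))) ^ 2 := by positivity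
        linarith
      · push Not at h'
        rw [hJ2 y h']
        have q := quad x p
        have : 0 ≤ ρ * ((1 + s) / 2) * (p - (m * x + (p - m * p))) ^ 2 := by positivity
        have e : (1 - x) * (x - d * y) + ρ * ((1 - y) * (A * y)) =
          (1 - x) * (x - d * p) + ρ * (A * p * (1 - p)) -
            ((y - p) * (d * (p - x)) + ρ * A * (y - p) ^ 2) := by
          linear_combination (y - p) * hρk - ρ * (y - p) * hk2
        have e2 : 0 ≤ (y - p) * (d * (p - x)) :=
          mul_nonneg (by linarith) (mul_nonneg hd.le (by linarith))
        have e3 : 0 ≤ ρ * A * (y - p) ^ 2 := by positivity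
        nlinarith
    · push Not at h
      rw [hJ2 x h, hJ2 y (h.trans hy.1)]
      have e : (1 - x) * (x - d * y) + ρ * ((1 - y) * (A * y)) = (1 - x) * (A * x) -
          ((y - x) * ((2 * (ρ * A) - d) * (x - p)) + ρ * A * (y - x) ^ 2) := by
        linear_combination (-(1 - x) * x) * hA1 + (y - x) * hρk - ρ * (y - x) * hk2
      have e2 : 0 ≤ (y - x) * ((2 * (ρ * A) - d) * (x - p)) :=
        mul_nonneg (by linarith [hy.1]) (mul_nonneg (by linarith) (by linarith))
      have e3 : 0 ≤ ρ * A * (y - x) ^ 2 := by positivity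
      linarith
end

section
/- Let 0 < d < ρ < 1, m ∈ (0,1) and n > 0. Define y_k = n·Σ_{i=0}^{k} m^i for k ∈ ℕ and Π_k = Σ_{i=0}^{k−1} ρ^i·(ρ−d)·y_i − ρ^k·d·y_k. Then: (i) for every k, Π_{k+1} − Π_k = ρ^{k+1}·(y_k − d·y_{k+1}); (ii) the sequence k ↦ y_k − d·y_{k+1} is strictly increasing; (iii) if Π_{k*} ≥ 0 for some k* ∈ ℕ, then Π_{k+1} > Π_k for every k ≥ k*. -/
open Finset

/-- For the linear-control repayment sequence y_k = n·Σ_{i=0}^k m^i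
with m ∈ (0,1), n > 0, 0 < d < ρ < 1, and consumer-type NPVs
Pi_k = Σ_{i<k} ρ^i(ρ−d)y_i − ρ^k d y_k:
(i) Pi_{k+1} − Pi_k = ρ^{k+1}(y_k − d y_{k+1});
(ii) k ↦ y_k − d y_{k+1} is strictly increasing;
(iii) if Pi_{k*} ≥ 0 then Pi_{k+1} > Pi_k for all k ≥ k*. -/
theorem stmt_7 (d ρ m n : ℝ) (hd : 0 < d) (hdρ : d < ρ) (hρ : ρ < 1)
    (hm0 : 0 < m) (hm1 : m < 1) (hn : 0 < n)
    (y : ℕ → ℝ) (hy : ∀ k, y k = n * ∑ i ∈ range (k + 1), m ^ i)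
    (Pi : ℕ → ℝ)
    (hPi : ∀ k, Pi k = (∑ i ∈ range k, ρ ^ i * (ρ - d) * y i) - ρ ^ k * d * y k) :
    (∀ k, Pi (k + 1) - Pi k = ρ ^ (k + 1) * (y k - d * y (k + 1))) ∧
    StrictMono (fun k => y k - d * y (k + 1)) ∧
    (∀ kstar : ℕ, 0 ≤ Pi kstar → ∀ k, kstar ≤ k → Pi k < Pi (k + 1)) := by
  have h1 : ∀ k, Pi (k + 1) - Pi k = ρ ^ (k + 1) * (y k - d * y (k + 1)) := by
    intro k
    rw [hPi (k + 1), hPi k, Finset.sum_range_succ]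
    ring
  have hys : ∀ k, y (k + 1) = y k + n * m ^ (k + 1) := by
    intro k
    rw [hy (k + 1), hy k, Finset.sum_range_succ _ (k + 1)]
    ring
  have h2 : StrictMono (fun k => y k - d * y (k + 1)) := by
    apply strictMono_nat_of_lt_succ
    intro k
    have hp : 0 < n * m ^ (k + 1) := by positivity
    have hdm : d * m < 1 := by nlinarith
    have h3 : 0 < n * m ^ (k + 1) * (1 - d * m) := mul_pos hp (by linarith)
    have e : y (k + 1) - d * y (k + 1 + 1)
        = y k - d * y (k + 1) + n * m ^ (k + 1) * (1 - d * m) := by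
      rw [hys (k + 1), hys k]
      ring
    show y k - d * y (k + 1) < y (k + 1) - d * y (k + 1 + 1)
    linarith
  refine ⟨h1, h2, ?_⟩
  have hρ0 : 0 < ρ := hd.trans hdρ
  intro ks hks k hk
  have hpos : 0 < y ks - d * y (ks + 1) := by
    by_contra hcon
    push Not at hcon
    have hle : ∀ j, j ≤ ks → Pi j ≤ Pi 0 := by
      intro j
      induction j with
      | zero => intro _; exact le_rfl
      | succ j ih =>
        intro hj
        have h3 := ih (by omega)
        have h4 : y j - d * y (j + 1) ≤ y ks - d * y (ks + 1) :=
          h2.monotone (by omega : j ≤ ks)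
        have h5 := mul_nonpos_of_nonneg_of_nonpos (pow_pos hρ0 (j + 1)).le (h4.trans hcon)
        have h6 := h1 j
        linarith
    have h7 := hle ks le_rfl
    have h8 : Pi 0 = -(d * n) := by
      rw [hPi 0, hy 0]
      simp
    have h9 := mul_pos hd hn
    linarith
  have h4 : y ks - d * y (ks + 1) ≤ y k - d * y (k + 1) := h2.monotone hk
  have h5 := mul_pos (pow_pos hρ0 (k + 1)) (hpos.trans_le h4)
  have h6 := h1 k
  linarith
end

section
/- Let a > 0 and b > 0, and define f(x) = (b^a/Γ(a))·x^{a−1}·e^{−b·x} for x > 0, and G(x) = x·f(x)/∫_x^∞ f(t) dt for x > 0. Then G is strictly increasing on (0,∞), G(x) → 0 as x → 0⁺, and G(x) → ∞ as x → ∞ (so the Gamma distribution satisfies Assumption 1). -/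
open Set Filter MeasureTheory

lemma aux_pos_s9 (c : ℝ) (g : ℝ → ℝ) (hg : IntegrableOn g (Ioi c)) (hp : ∀ s, c < s → 0 < g s) :
    0 < ∫ s in Ioi c, g s := by
  rw [setIntegral_pos_iff_support_of_nonneg_ae]
  · have : Function.support g ∩ Ioi c = Ioi c := by
      apply inter_eq_right.2
      intro s hs
      exact (hp s hs).ne'
    rw [this]; simp
  · exact (ae_restrict_mem measurableSet_Ioi).mono fun s hs => (hp s hs).le
  · exact hg

lemma aux_int (a c : ℝ) (ha : 0 < a) (hc : 0 < c) :
    IntegrableOn (fun s : ℝ => s ^ (a - 1) * Real.exp (-(c * s))) (Ioi 0) := by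
  have := integrableOn_rpow_mul_exp_neg_mul_rpow (p := 1) (s := a - 1) (b := c)
    (by linarith) (by norm_num) hc
  simpa using this

lemma aux_intH (a c : ℝ) (ha : 0 < a) (hc : 0 < c) :
    IntegrableOn (fun s : ℝ => s ^ (a - 1) * Real.exp (-(c * (s - 1)))) (Ioi 1) := by
  have h := ((aux_int a c ha hc).mono_set (Ioi_subset_Ioi zero_le_one)).const_mul (Real.exp c)
  refine IntegrableOn.congr_fun h (fun s _ => ?_) measurableSet_Ioi
  have : -(c * (s - 1)) = c + -(c * s) := by ring
  simp only [this, Real.exp_add]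
  ring

/-- For the Gamma density f(x) = (b^a/Γ(a)) x^{a−1} e^{−bx} (x > 0)
and G(x) = x f(x)/∫_x^∞ f, G is strictly increasing on (0,∞), tends to 0 as
x → 0⁺ and to ∞ as x → ∞ — so the Gamma distribution satisfies Assumption 1. -/
theorem stmt_9 (a b : ℝ) (ha : 0 < a) (hb : 0 < b)
    (f : ℝ → ℝ)
    (hf : ∀ x : ℝ, 0 < x →
      f x = (b ^ a / Real.Gamma a) * x ^ (a - 1) * Real.exp (-(b * x)))
    (G : ℝ → ℝ)
    (hG : ∀ x : ℝ, 0 < x → G x = x * f x / ∫ t in Ioi x, f t) :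
    StrictMonoOn G (Ioi 0) ∧
    Tendsto G (nhdsWithin 0 (Ioi 0)) (nhds 0) ∧
    Tendsto G atTop atTop := by
  have hC : 0 < b ^ a / Real.Gamma a := div_pos (Real.rpow_pos_of_pos hb a) (Real.Gamma_pos_of_pos ha)
  have hfpos : ∀ x, 0 < x → 0 < f x := fun x hx => by
    rw [hf x hx]
    have := Real.rpow_pos_of_pos hx (a - 1)
    positivity
  have hfint : IntegrableOn f (Ioi 0) := by
    refine IntegrableOn.congr_fun ((aux_int a b ha hb).const_mul (b ^ a / Real.Gamma a)) (fun s hs => ?_)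
      measurableSet_Ioi
    simp only [hf s hs]; ring
  let H : ℝ → ℝ := fun x => ∫ s in Ioi 1, s ^ (a - 1) * Real.exp (-(b * x * (s - 1)))
  have hHpos : ∀ x, 0 < x → 0 < H x := fun x hx => by
    refine aux_pos_s9 1 _ (aux_intH a (b * x) ha (by positivity)) (fun s hs => ?_)
    have := Real.rpow_pos_of_pos (show (0:ℝ) < s by linarith) (a - 1)
    positivity
  have hGH : ∀ x, 0 < x → G x = (H x)⁻¹ := fun x hx => by
    have h1 : ∫ t in Ioi x, f t = x * f x * H x := by
      have h2 := integral_comp_mul_left_Ioi f 1 hx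
      rw [mul_one, smul_eq_mul] at h2
      have h3 : ∫ t in Ioi x, f t = x * ∫ s in Ioi 1, f (x * s) := by
        rw [h2]; field_simp
      rw [h3, mul_assoc]
      congr 1
      simp only [H]
      rw [← integral_const_mul]
      refine setIntegral_congr_fun measurableSet_Ioi (fun s hs => ?_)
      have hs0 : (0:ℝ) < s := lt_trans one_pos hs
      have e : -(b * (x * s)) = -(b * x) + -(b * x * (s - 1)) := by ring
      simp only [hf x hx, hf (x * s) (by positivity), Real.mul_rpow hx.le hs0.le]
      rw [e, Real.exp_add]
      ring
    rw [hG x hx, h1]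
    have := hfpos x hx
    have := hHpos x hx
    field_simp
  refine ⟨?_, ?_, ?_⟩
  · intro x hx y hy hxy
    have hx : 0 < x := hx
    have hy : 0 < y := hy
    rw [hGH x hx, hGH y hy]
    apply inv_strictAnti₀ (hHpos y hy)
    rw [← sub_pos]
    have ix := aux_intH a (b * x) ha (by positivity)
    have iy := aux_intH a (b * y) ha (by positivity)
    simp only [H]
    rw [← integral_sub ix iy]
    refine aux_pos_s9 1 _ (ix.sub iy) (fun s hs => ?_)
    have h1 := Real.rpow_pos_of_pos (show (0:ℝ) < s by linarith) (a - 1)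
    rw [sub_pos]
    apply mul_lt_mul_of_pos_left _ h1
    apply Real.exp_lt_exp.2
    have : b * x * (s - 1) < b * y * (s - 1) := by
      have : 0 < s - 1 := by linarith
      gcongr
    linarith
  · set D := ∫ t in Ioi 1, f t with hD
    have hDpos : 0 < D := aux_pos_s9 1 f (hfint.mono_set (Ioi_subset_Ioi zero_le_one))
      (fun s hs => hfpos s (by linarith))
    have hlim : Tendsto (fun x : ℝ => b ^ a / Real.Gamma a * x ^ a / D)
        (nhdsWithin 0 (Ioi 0)) (nhds 0) := by
      have h1 : Tendsto (fun x : ℝ => x ^ a) (nhdsWithin 0 (Ioi 0)) (nhds 0) := by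
        have := (Real.continuousAt_rpow_const 0 a (Or.inr ha.le)).tendsto
        rw [Real.zero_rpow ha.ne'] at this
        exact this.mono_left nhdsWithin_le_nhds
      simpa using (h1.const_mul (b ^ a / Real.Gamma a)).div_const D
    refine squeeze_zero' ?_ ?_ hlim
    · filter_upwards [self_mem_nhdsWithin] with x hx
      rw [hGH x hx]
      exact (inv_pos.2 (hHpos x hx)).le
    · filter_upwards [Ioo_mem_nhdsGT (zero_lt_one' ℝ)] with x hx
      obtain ⟨hx, hx1⟩ := hx
      rw [hG x hx]
      have hle : D ≤ ∫ t in Ioi x, f t := by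
        apply setIntegral_mono_set (hfint.mono_set (Ioi_subset_Ioi hx.le))
        · exact (ae_restrict_mem measurableSet_Ioi).mono fun s hs => (hfpos s (lt_trans hx hs)).le
        · exact (Ioi_subset_Ioi hx1.le).eventuallyLE
      have hnum : x * f x ≤ b ^ a / Real.Gamma a * x ^ a := by
        have e1 : x ^ a = x ^ (a - 1) * x := by
          rw [← Real.rpow_add_one hx.ne']; congr 1; ring
        have e2 : Real.exp (-(b * x)) ≤ 1 := Real.exp_le_one_iff.2 (by nlinarith)
        have hp := Real.rpow_pos_of_pos hx (a - 1)
        rw [hf x hx, e1]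
        calc _ = (b ^ a / Real.Gamma a * (x ^ (a - 1) * x)) * Real.exp (-(b * x)) := by ring
          _ ≤ _ := mul_le_of_le_one_right (by positivity) e2
      have := Real.rpow_pos_of_pos hx a
      exact div_le_div₀ (by positivity) hnum hDpos hle
  · have hH0 : Tendsto H atTop (nhds 0) := by
      have h0 : (0:ℝ) = ∫ s in Ioi (1:ℝ), (0:ℝ) := by simp
      rw [h0]
      refine tendsto_integral_filter_of_dominated_convergence
        (fun s : ℝ => s ^ (a - 1) * Real.exp (-(b * (s - 1)))) ?_ ?_ (aux_intH a b ha hb) ?_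
      · filter_upwards [eventually_gt_atTop 0] with x hx
        exact (aux_intH a (b * x) ha (by positivity)).aestronglyMeasurable
      · filter_upwards [eventually_ge_atTop 1] with x hx
        refine (ae_restrict_mem measurableSet_Ioi).mono fun s hs => ?_
        have hs : 1 < s := hs
        have h1 := Real.rpow_pos_of_pos (show (0:ℝ) < s by linarith) (a - 1)
        rw [Real.norm_of_nonneg (by positivity)]
        apply mul_le_mul_of_nonneg_left _ h1.le
        apply Real.exp_le_exp.2
        have : 0 < b * (s - 1) := mul_pos hb (by linarith)
        nlinarith
      · refine (ae_restrict_mem measurableSet_Ioi).mono fun s hs => ?_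
        have hs : 1 < s := hs
        have h2 : Tendsto (fun x : ℝ => b * x * (s - 1)) atTop atTop :=
          (tendsto_id.const_mul_atTop hb).atTop_mul_const (by linarith)
        simpa using (Real.tendsto_exp_neg_atTop_nhds_zero.comp h2).const_mul (s ^ (a - 1))
    have hH1 : Tendsto H atTop (nhdsWithin 0 (Ioi 0)) :=
      tendsto_nhdsWithin_iff.2 ⟨hH0, (eventually_gt_atTop 0).mono fun x hx => hHpos x hx⟩
    refine hH1.inv_tendsto_nhdsGT_zero.congr' ?_
    filter_upwards [eventually_gt_atTop 0] with x hx
    rw [hGH x hx]; rfl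
end

section
/- Let a > 0 and b > 0, let B(a,b) = Γ(a)Γ(b)/Γ(a+b), and define f(x) = x^{a−1}(1−x)^{b−1}/B(a,b) for x ∈ (0,1), and G(x) = x·f(x)/∫_x^1 f(t) dt for x ∈ (0,1). Then G is strictly increasing on (0,1), G(x) → 0 as x → 0⁺, and G(x) → ∞ as x → 1⁻ (so the Beta distribution satisfies Assumption 1). -/
open Set Filter MeasureTheory

lemma aux_int_pos (g : ℝ → ℝ) (hi : IntegrableOn g (Ioo 0 1))
    (hp : ∀ s ∈ Ioo (0:ℝ) 1, 0 < g s) : 0 < ∫ s in Ioo (0:ℝ) 1, g s := by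
  rw [setIntegral_pos_iff_support_of_nonneg_ae _ hi]
  · have : Function.support g ∩ Ioo 0 1 = Ioo (0:ℝ) 1 := by
      apply inter_eq_right.2
      intro s hs
      exact (hp s hs).ne'
    rw [this]; simp
  · filter_upwards [ae_restrict_mem measurableSet_Ioo] with s hs
    exact (hp s hs).le

/-- the integrand of `1 / G` after the substitution `t = 1 - (1-x) s` -/
noncomputable def auxK (a b x s : ℝ) : ℝ :=
  (1 - x) / (1 - (1 - x) * s) * ((1 - (1 - x) * s) / x) ^ a * s ^ (b - 1)

lemma aux_rpow_int (b : ℝ) (hb : 0 < b) :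
    IntegrableOn (fun s : ℝ => s ^ (b - 1)) (Ioo 0 1) := by
  have := intervalIntegral.intervalIntegrable_rpow' (a := 0) (b := 1) (r := b - 1) (by linarith)
  rw [intervalIntegrable_iff_integrableOn_Ioo_of_le zero_le_one] at this
  exact this

lemma aux_y {x s : ℝ} (hx : x ∈ Ioo (0:ℝ) 1) (hs : s ∈ Ioo (0:ℝ) 1) :
    x < 1 - (1 - x) * s ∧ 1 - (1 - x) * s < 1 := by
  obtain ⟨h0, h1⟩ := hx
  obtain ⟨s0, s1⟩ := hs
  constructor <;> nlinarith [mul_pos (sub_pos.2 h1) s0, mul_pos (sub_pos.2 h1) (sub_pos.2 s1)]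

lemma auxK_pos {a b x s : ℝ} (hx : x ∈ Ioo (0:ℝ) 1) (hs : s ∈ Ioo (0:ℝ) 1) :
    0 < auxK a b x s := by
  obtain ⟨h1, h2⟩ := aux_y hx hs
  have := hx.1
  have := sub_pos.2 hx.2
  have : 0 < 1 - (1 - x) * s := by linarith
  have := hs.1
  unfold auxK
  positivity

lemma auxK_le {a b x s : ℝ} (ha : 0 < a) (hx : x ∈ Ioo (0:ℝ) 1) (hs : s ∈ Ioo (0:ℝ) 1) :
    auxK a b x s ≤ (1 - x) / x * (1 / x) ^ a * s ^ (b - 1) := by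
  obtain ⟨h1, h2⟩ := aux_y hx hs
  have h3 := hx.1
  have h4 := sub_pos.2 hx.2
  have : 0 < 1 - (1 - x) * s := by linarith
  have := hs.1
  unfold auxK
  gcongr

lemma auxK_ge {a b x s : ℝ} (ha : 0 < a) (hx : x ∈ Ioo (0:ℝ) 1) (hs : s ∈ Ioo (0:ℝ) 1) :
    (1 - x) * (1 / x) ^ a * ((1 - s) ^ a * s ^ (b - 1)) ≤ auxK a b x s := by
  obtain ⟨h1, h2⟩ := aux_y hx hs
  have h3 := hx.1
  have h4 := sub_pos.2 hx.2
  have h5 : 0 < 1 - (1 - x) * s := by linarith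
  have h6 := hs.1
  have h7 := sub_pos.2 hs.2
  have e : (1 - x) * (1 / x) ^ a * ((1 - s) ^ a * s ^ (b - 1))
    = (1 - x) * ((1 - s) / x) ^ a * s ^ (b - 1) := by
    rw [div_eq_mul_one_div (1 - s) x, Real.mul_rpow h7.le (by positivity)]; ring
  rw [e]
  unfold auxK
  gcongr
  · rw [le_div_iff₀ h5]
    nlinarith
  · nlinarith

lemma auxK_lt {a b x y s : ℝ} (ha : 0 < a) (hx : x ∈ Ioo (0:ℝ) 1) (hy : y ∈ Ioo (0:ℝ) 1)
    (hxy : x < y) (hs : s ∈ Ioo (0:ℝ) 1) : auxK a b y s < auxK a b x s := by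
  obtain ⟨h1, h2⟩ := aux_y hx hs
  obtain ⟨g1, g2⟩ := aux_y hy hs
  have h3 := hx.1
  have h4 := sub_pos.2 hx.2
  have h5 : 0 < 1 - (1 - x) * s := by linarith
  have h6 := hs.1
  have h7 := sub_pos.2 hs.2
  have g3 := hy.1
  have g4 := sub_pos.2 hy.2
  have g5 : 0 < 1 - (1 - y) * s := by linarith
  unfold auxK
  have A : (1 - y) / (1 - (1 - y) * s) < (1 - x) / (1 - (1 - x) * s) := by
    rw [div_lt_div_iff₀ g5 h5]; nlinarith
  have C : (1 - (1 - y) * s) / y ≤ (1 - (1 - x) * s) / x := by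
    rw [div_le_div_iff₀ g3 h3]; nlinarith [mul_pos (sub_pos.2 hxy) h7]
  have D : ((1 - (1 - y) * s) / y) ^ a ≤ ((1 - (1 - x) * s) / x) ^ a :=
    Real.rpow_le_rpow (by positivity) C ha.le
  exact mul_lt_mul_of_pos_right (mul_lt_mul A D (by positivity) (by positivity)) (by positivity)

lemma auxK_int {a b x : ℝ} (ha : 0 < a) (hb : 0 < b) (hx : x ∈ Ioo (0:ℝ) 1) :
    IntegrableOn (auxK a b x) (Ioo 0 1) := by
  refine Integrable.mono' ((aux_rpow_int b hb).const_mul ((1 - x) / x * (1 / x) ^ a)) ?_ ?_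
  · apply Measurable.aestronglyMeasurable
    unfold auxK
    fun_prop
  · filter_upwards [ae_restrict_mem measurableSet_Ioo] with s hs
    rw [Real.norm_of_nonneg (auxK_pos hx hs).le]
    exact auxK_le ha hx hs

lemma auxL_int {a b : ℝ} (ha : 0 < a) (hb : 0 < b) :
    IntegrableOn (fun s : ℝ => (1 - s) ^ a * s ^ (b - 1)) (Ioo 0 1) := by
  refine Integrable.mono' (aux_rpow_int b hb) ?_ ?_
  · apply Measurable.aestronglyMeasurable
    fun_prop
  · filter_upwards [ae_restrict_mem measurableSet_Ioo] with s hs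
    have h6 := hs.1
    have h7 := sub_pos.2 hs.2
    rw [Real.norm_of_nonneg (by positivity)]
    have : (1 - s) ^ a ≤ 1 := Real.rpow_le_one h7.le (by linarith) ha.le
    exact mul_le_of_le_one_left (by positivity) this

/-- For the Beta density f(x) = x^{a−1}(1−x)^{b−1}/B(a,b) on (0,1)
and G(x) = x f(x)/∫_x^1 f, G is strictly increasing on (0,1), tends to 0 as
x → 0⁺ and to ∞ as x → 1⁻ — so the Beta distribution satisfies Assumption 1. -/
theorem stmt_10 (a b : ℝ) (ha : 0 < a) (hb : 0 < b)
    (B : ℝ) (hB : B = Real.Gamma a * Real.Gamma b / Real.Gamma (a + b))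
    (f : ℝ → ℝ)
    (hf : ∀ x ∈ Ioo (0:ℝ) 1, f x = x ^ (a - 1) * (1 - x) ^ (b - 1) / B)
    (G : ℝ → ℝ)
    (hG : ∀ x ∈ Ioo (0:ℝ) 1, G x = x * f x / ∫ t in Ioo x 1, f t) :
    StrictMonoOn G (Ioo 0 1) ∧
    Tendsto G (nhdsWithin 0 (Ioi 0)) (nhds 0) ∧
    Tendsto G (nhdsWithin 1 (Iio 1)) atTop := by
  have hB0 : 0 < B := by
    rw [hB]
    have := Real.Gamma_pos_of_pos ha
    have := Real.Gamma_pos_of_pos hb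
    have := Real.Gamma_pos_of_pos (add_pos ha hb)
    positivity
  have key : ∀ x ∈ Ioo (0:ℝ) 1, G x = (∫ s in Ioo (0:ℝ) 1, auxK a b x s)⁻¹ := by
    intro x hx
    have h3 := hx.1
    have h4 := sub_pos.2 hx.2
    have hfx : 0 < x * f x := by rw [hf x hx]; positivity
    have e : ∫ t in Ioo x 1, f t = x * f x * ∫ s in Ioo (0:ℝ) 1, auxK a b x s := by
      have e1 := intervalIntegral.integral_comp_sub_mul (a := 0) (b := 1) f h4.ne' 1
      simp only [mul_one, sub_sub_cancel, mul_zero, sub_zero, smul_eq_mul] at e1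
      rw [intervalIntegral.integral_of_le zero_le_one, intervalIntegral.integral_of_le hx.2.le,
        integral_Ioc_eq_integral_Ioo, integral_Ioc_eq_integral_Ioo] at e1
      have e2 : ∫ t in Ioo x 1, f t = (1 - x) * ∫ s in Ioo (0:ℝ) 1, f (1 - (1 - x) * s) := by
        rw [e1]; field_simp
      rw [e2, ← integral_const_mul, ← integral_const_mul]
      refine setIntegral_congr_fun measurableSet_Ioo ?_
      intro s hs
      obtain ⟨h1, h2⟩ := aux_y hx hs
      have h5 : 0 < 1 - (1 - x) * s := by linarith
      have h6 := hs.1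
      simp only
      rw [hf x hx, hf _ ⟨h5, h2⟩, auxK, sub_sub_cancel, Real.mul_rpow h4.le h6.le,
        Real.div_rpow h5.le h3.le, Real.rpow_sub_one h5.ne', Real.rpow_sub_one h3.ne']
      have := Real.rpow_pos_of_pos h3 a
      field_simp
    rw [hG x hx, e, div_mul_eq_div_div, div_self hfx.ne', one_div]
  have hpos : ∀ x ∈ Ioo (0:ℝ) 1, 0 < ∫ s in Ioo (0:ℝ) 1, auxK a b x s := fun x hx =>
    aux_int_pos _ (auxK_int ha hb hx) fun s hs => auxK_pos hx hs
  refine ⟨?_, ?_, ?_⟩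
  · intro x hx y hy hxy
    rw [key x hx, key y hy]
    apply inv_strictAnti₀ (hpos y hy)
    have := aux_int_pos _ ((auxK_int ha hb hx).sub (auxK_int ha hb hy))
      fun s hs => sub_pos.2 (auxK_lt (b := b) ha hx hy hxy hs)
    have h2 := integral_sub (auxK_int ha hb hx) (auxK_int ha hb hy)
    simp only [Pi.sub_apply] at this
    linarith
  · set K := ∫ s in Ioo (0:ℝ) 1, (1 - s) ^ a * s ^ (b - 1) with hK
    have hK0 : 0 < K := aux_int_pos _ (auxL_int ha hb) fun s hs => by
      have h6 := hs.1
      have h7 := sub_pos.2 hs.2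
      positivity
    have hmem : ∀ᶠ x in nhdsWithin (0:ℝ) (Ioi 0), x ∈ Ioo (0:ℝ) 1 :=
      Ioo_mem_nhdsGT zero_lt_one
    have hlim : Tendsto (fun x : ℝ => x ^ a / ((1 - x) * K)) (nhdsWithin 0 (Ioi 0)) (nhds 0) := by
      have c : ContinuousAt (fun x : ℝ => x ^ a / ((1 - x) * K)) 0 := by
        refine ContinuousAt.div (Real.continuousAt_rpow_const _ _ (Or.inr ha.le)) (by fun_prop) ?_
        simp [hK0.ne']
      have := c.tendsto
      simp only [Real.zero_rpow ha.ne', zero_div] at this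
      exact this.mono_left nhdsWithin_le_nhds
    refine tendsto_of_tendsto_of_tendsto_of_le_of_le' tendsto_const_nhds hlim ?_ ?_
    · filter_upwards [hmem] with x hx
      rw [key x hx]
      exact (inv_pos.2 (hpos x hx)).le
    · filter_upwards [hmem] with x hx
      have h3 := hx.1
      have h4 := sub_pos.2 hx.2
      have h8 := Real.rpow_pos_of_pos h3 a
      rw [key x hx]
      have l : (1 - x) * (1 / x) ^ a * K ≤ ∫ s in Ioo (0:ℝ) 1, auxK a b x s := by
        rw [hK, ← integral_const_mul]
        exact setIntegral_mono_on ((auxL_int ha hb).const_mul _) (auxK_int ha hb hx)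
          measurableSet_Ioo fun s hs => auxK_ge ha hx hs
      calc _ ≤ ((1 - x) * (1 / x) ^ a * K)⁻¹ := inv_anti₀ (by positivity) l
        _ = _ := by
          rw [Real.div_rpow zero_le_one h3.le, Real.one_rpow]
          field_simp
  · set K := ∫ s in Ioo (0:ℝ) 1, s ^ (b - 1) with hK
    have hK0 : 0 < K := aux_int_pos _ (aux_rpow_int b hb) fun s hs => by
      have h6 := hs.1
      positivity
    have hmem : ∀ᶠ x in nhdsWithin (1:ℝ) (Iio 1), x ∈ Ioo (0:ℝ) 1 :=
      Ioo_mem_nhdsLT zero_lt_one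
    have hlim : Tendsto (fun x : ℝ => ((1 - x) / x * (1 / x) ^ a * K)⁻¹)
        (nhdsWithin 1 (Iio 1)) atTop := by
      apply Tendsto.inv_tendsto_nhdsGT_zero
      rw [tendsto_nhdsWithin_iff]
      constructor
      · have c : ContinuousAt (fun x : ℝ => (1 - x) / x * (1 / x) ^ a * K) 1 := by
          refine ContinuousAt.mul (ContinuousAt.mul ?_ ?_) continuousAt_const
          · exact ContinuousAt.div (by fun_prop) continuousAt_id one_ne_zero
          · exact ContinuousAt.rpow_const
              (ContinuousAt.div continuousAt_const continuousAt_id one_ne_zero) (Or.inr ha.le)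
        have := c.tendsto
        simp only [sub_self, zero_div, zero_mul] at this
        exact this.mono_left nhdsWithin_le_nhds
      · filter_upwards [hmem] with x hx
        have h3 := hx.1
        have h4 := sub_pos.2 hx.2
        simp only [mem_Ioi]
        positivity
    refine tendsto_atTop_mono' _ ?_ hlim
    filter_upwards [hmem] with x hx
    rw [key x hx]
    apply inv_anti₀ (hpos x hx)
    rw [hK, ← integral_const_mul]
    exact setIntegral_mono_on (auxK_int ha hb hx) ((aux_rpow_int b hb).const_mul _)
      measurableSet_Ioo fun s hs => auxK_le ha hx hs
end

section
/- Assume F is differentiable on (0,u) with derivative f and Assumption 1 holds. Let 0 < d < ρ < 1 and let x̄ ∈ (0,u) satisfy G(x̄) = 1 − ((1−ρ)d)/((1−d)ρ). Then for every x with x̄ ≤ x < u and every y with x < y < u: x − d·y + ρ·((1 − F(y))/(1 − F(x)))·((1−d)/(1−ρ))·y < ((1−d)/(1−ρ))·x. Consequently, sup_{y ∈ [x,u)} ( x − d·y + ρ·((1 − F(y))/(1 − F(x)))·((1−d)/(1−ρ))·y ) = ((1−d)/(1−ρ))·x, attained only at y = x. -/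
open Set MeasureTheory

/-- Above the lending threshold x̄ the constant lending policy is
optimal: for x̄ ≤ x < u and any y ∈ (x,u), the one-step payoff of raising the
repayment amount to y and then lending y forever is strictly less than
((1−d)/(1−ρ))·x; hence the supremum over y ∈ [x,u) equals ((1−d)/(1−ρ))·x and
is attained only at y = x. -/
theorem stmt_13 (u : EReal) (hu : 0 < u)
    (f : ℝ → ℝ) (hf_cont : Continuous f)
    (hf_pos : ∀ x : ℝ, 0 < x → (x : EReal) < u → 0 < f x)
    (hf_zero : ∀ x : ℝ, x ≤ 0 ∨ u ≤ (x : EReal) → f x = 0)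
    (hf_prob : ∫ t : ℝ, f t = 1)
    (F : ℝ → ℝ) (hF : ∀ x : ℝ, F x = ∫ t in (0:ℝ)..x, f t)
    (hF_deriv : ∀ x : ℝ, 0 < x → (x : EReal) < u → HasDerivAt F (f x) x)
    (hF_lt : ∀ x : ℝ, (x : EReal) < u → F x < 1)
    (G : ℝ → ℝ) (hG : ∀ x : ℝ, G x = x * f x / (1 - F x))
    -- Assumption 1:
    (hG_mono : StrictMonoOn G {x : ℝ | 0 ≤ x ∧ (x : EReal) < u})
    (hG_zero : G 0 = 0)
    (hG_lim : ∀ c : ℝ, c < 1 → ∃ x : ℝ, 0 ≤ x ∧ (x : EReal) < u ∧ c < G x)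
    (d ρ : ℝ) (hd : 0 < d) (hdρ : d < ρ) (hρ : ρ < 1)
    (xbar : ℝ) (hxbar : 0 < xbar ∧ (xbar : EReal) < u)
    (hxbar_eq : G xbar = 1 - ((1 - ρ) * d) / ((1 - d) * ρ)) :
    ∀ x : ℝ, xbar ≤ x → (x : EReal) < u →
      (∀ y : ℝ, x < y → (y : EReal) < u →
        x - d * y + ρ * ((1 - F y) / (1 - F x)) * ((1 - d) / (1 - ρ)) * y <
          ((1 - d) / (1 - ρ)) * x) ∧
      IsGreatest
        ((fun y => x - d * y + ρ * ((1 - F y) / (1 - F x)) * ((1 - d) / (1 - ρ)) * y) ''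
          {y : ℝ | x ≤ y ∧ (y : EReal) < u})
        (((1 - d) / (1 - ρ)) * x) ∧
      (∀ y : ℝ, x ≤ y → (y : EReal) < u →
        x - d * y + ρ * ((1 - F y) / (1 - F x)) * ((1 - d) / (1 - ρ)) * y =
          ((1 - d) / (1 - ρ)) * x → y = x) := by
  intro x hx hxu
  have hx0 : 0 < x := lt_of_lt_of_le hxbar.1 hx
  have h1ρ : 0 < 1 - ρ := by linarith
  have h1d : 0 < 1 - d := by linarith
  have hρ0 : 0 < ρ := by linarith
  have hSx : 0 < 1 - F x := by linarith [hF_lt x hxu]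
  have hxeq : x - d * x + ρ * ((1 - F x) / (1 - F x)) * ((1 - d) / (1 - ρ)) * x =
      ((1 - d) / (1 - ρ)) * x := by
    rw [div_self hSx.ne']
    field_simp
    ring
  have main : ∀ y : ℝ, x < y → (y : EReal) < u →
        x - d * y + ρ * ((1 - F y) / (1 - F x)) * ((1 - d) / (1 - ρ)) * y <
          ((1 - d) / (1 - ρ)) * x := by
    intro y hxy hyu
    have hltu : ∀ z : ℝ, z ≤ y → (z : EReal) < u := fun z hz =>
      lt_of_le_of_lt (EReal.coe_le_coe_iff.2 hz) hyu
    have hFd : ∀ z : ℝ, x ≤ z → z ≤ y → HasDerivAt F (f z) z := fun z h1 h2 =>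
      hF_deriv z (by linarith) (hltu z h2)
    have hφ : ∀ z : ℝ, x ≤ z → z ≤ y → HasDerivAt
        (fun y => x - d * y + ρ * ((1 - F y) / (1 - F x)) * ((1 - d) / (1 - ρ)) * y)
        (-d + ρ * ((1 - d) / (1 - ρ)) * (((1 - F z) - z * f z) / (1 - F x))) z := by
      intro z h1 h2
      have hS := (((hFd z h1 h2).const_sub 1).div_const (1 - F x)).const_mul ρ
      have hS2 := (hS.mul_const ((1 - d) / (1 - ρ))).mul (hasDerivAt_id z)
      have hL := ((hasDerivAt_id z).const_mul d).const_sub x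
      refine (hL.add hS2).congr_deriv ?_
      simp only [id]
      ring
    obtain ⟨z, hz, hze⟩ := exists_hasDerivAt_eq_slope _ _ hxy
      (fun z hz => (hφ z hz.1 hz.2).continuousAt.continuousWithinAt)
      (fun z hz => hφ z hz.1.le hz.2.le)
    obtain ⟨w, hw, hwe⟩ := exists_hasDerivAt_eq_slope F f hz.1
      (fun w hw => (hFd w hw.1 (hw.2.trans hz.2.le)).continuousAt.continuousWithinAt)
      (fun w hw => hFd w hw.1.le (hw.2.le.trans hz.2.le))
    have hfw : 0 < f w := hf_pos w (by linarith [hw.1]) (hltu w (by linarith [hw.2, hz.2]))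
    have hFz : F x < F z := by
      rw [hwe] at hfw
      have := (div_pos_iff_of_pos_right (sub_pos.2 hz.1)).1 hfw
      linarith
    have hzu := hltu z hz.2.le
    have hSz : 0 < 1 - F z := by linarith [hF_lt z hzu]
    have hGz : G xbar < G z := hG_mono ⟨hxbar.1.le, hxbar.2⟩
      ⟨by linarith [hz.1], hzu⟩ (by linarith [hz.1])
    have hc : 0 < ((1 - ρ) * d) / ((1 - d) * ρ) := by positivity
    have hk : 0 < ρ * ((1 - d) / (1 - ρ)) := by positivity
    have hkc : ρ * ((1 - d) / (1 - ρ)) * (((1 - ρ) * d) / ((1 - d) * ρ)) = d := by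
      field_simp
    have hzG : ((1 - F z) - z * f z) / (1 - F x) = (1 - F z) / (1 - F x) * (1 - G z) := by
      rw [hG z]
      field_simp
    have hr0 : 0 < (1 - F z) / (1 - F x) := by positivity
    have hr1 : (1 - F z) / (1 - F x) ≤ 1 := by
      rw [div_le_one hSx]; linarith
    have hlt : (1 - F z) / (1 - F x) * (1 - G z) < ((1 - ρ) * d) / ((1 - d) * ρ) := by
      rcases le_total 0 (1 - G z) with h | h
      · have := mul_le_of_le_one_left h hr1
        linarith
      · have := mul_nonpos_of_nonneg_of_nonpos hr0.le h
        linarith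
    have hneg := mul_lt_mul_of_pos_left hlt hk
    rw [hkc, ← hzG] at hneg
    rw [eq_div_iff (sub_pos.2 hxy).ne'] at hze
    have hlt0 := mul_neg_of_neg_of_pos (a := -d + ρ * ((1 - d) / (1 - ρ)) *
      (((1 - F z) - z * f z) / (1 - F x))) (by linarith) (sub_pos.2 hxy)
    rw [hze] at hlt0
    linarith
  refine ⟨main, ⟨⟨x, ⟨le_rfl, hxu⟩, hxeq⟩, ?_⟩, ?_⟩
  · rintro _ ⟨y, ⟨hxy, hyu⟩, rfl⟩
    rcases hxy.eq_or_lt with rfl | h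
    · exact hxeq.le
    · exact (main y h hyu).le
  · intro y hxy hyu he
    rcases hxy.eq_or_lt with h | h
    · exact h.symm
    · exact absurd he (main y h hyu).ne
end

section
/- Assume F is differentiable on (0,u) with derivative f and Assumption 1 holds. Let 0 < d < ρ < 1 and let x̄ ∈ (0,u) satisfy G(x̄) = 1 − ((1−ρ)d)/((1−d)ρ). Then for every x with 0 < x < x̄ there exists y with x < y < u such that x − d·y + ρ·((1 − F(y))/(1 − F(x)))·((1−d)/(1−ρ))·y > ((1−d)/(1−ρ))·x. In other words, when the current income lower bound is below the lending threshold x̄, the constant (no-experimentation) lending policy is strictly improvable. -/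
open Set MeasureTheory

/-- Below the lending threshold x̄ the constant (no-experimentation)
lending policy is strictly improvable: for 0 < x < x̄ there is y ∈ (x,u) whose
one-step payoff exceeds ((1−d)/(1−ρ))·x. -/
theorem stmt_14 (u : EReal) (hu : 0 < u)
    (f : ℝ → ℝ) (hf_cont : Continuous f)
    (hf_pos : ∀ x : ℝ, 0 < x → (x : EReal) < u → 0 < f x)
    (hf_zero : ∀ x : ℝ, x ≤ 0 ∨ u ≤ (x : EReal) → f x = 0)
    (hf_prob : ∫ t : ℝ, f t = 1)
    (F : ℝ → ℝ) (hF : ∀ x : ℝ, F x = ∫ t in (0:ℝ)..x, f t)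
    (hF_deriv : ∀ x : ℝ, 0 < x → (x : EReal) < u → HasDerivAt F (f x) x)
    (hF_lt : ∀ x : ℝ, (x : EReal) < u → F x < 1)
    (G : ℝ → ℝ) (hG : ∀ x : ℝ, G x = x * f x / (1 - F x))
    -- Assumption 1:
    (hG_mono : StrictMonoOn G {x : ℝ | 0 ≤ x ∧ (x : EReal) < u})
    (hG_zero : G 0 = 0)
    (hG_lim : ∀ c : ℝ, c < 1 → ∃ x : ℝ, 0 ≤ x ∧ (x : EReal) < u ∧ c < G x)
    (d ρ : ℝ) (hd : 0 < d) (hdρ : d < ρ) (hρ : ρ < 1)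
    (xbar : ℝ) (hxbar : 0 < xbar ∧ (xbar : EReal) < u)
    (hxbar_eq : G xbar = 1 - ((1 - ρ) * d) / ((1 - d) * ρ)) :
    ∀ x : ℝ, 0 < x → x < xbar →
      ∃ y : ℝ, x < y ∧ (y : EReal) < u ∧
        ((1 - d) / (1 - ρ)) * x <
          x - d * y + ρ * ((1 - F y) / (1 - F x)) * ((1 - d) / (1 - ρ)) * y := by
  intro x hx hxb
  have hxbE : (x : EReal) < (xbar : EReal) := by exact_mod_cast hxb
  have hxu : (x : EReal) < u := hxbE.trans hxbar.2
  have hGx : G x < G xbar := hG_mono ⟨hx.le, hxu⟩ ⟨hxbar.1.le, hxbar.2⟩ hxb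
  have hS : 0 < 1 - F x := by linarith [hF_lt x hxu]
  have h1d : 0 < 1 - d := by linarith
  have h1ρ : 0 < 1 - ρ := by linarith
  have hρ0 : 0 < ρ := by linarith
  have hder : HasDerivAt
      (fun y : ℝ => x - d * y + ρ * ((1 - F y) / (1 - F x)) * ((1 - d) / (1 - ρ)) * y)
      (-d + ρ * ((1 - d) / (1 - ρ)) * (1 - G x)) x := by
    have hFd := hF_deriv x hx hxu
    have h1 := ((hasDerivAt_id x).const_mul d).const_sub x
    have h2 := (((((hFd.const_sub 1).div_const (1 - F x)).const_mul ρ).mul_const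
      ((1 - d) / (1 - ρ))).mul (hasDerivAt_id x))
    refine (h1.add h2).congr_deriv ?_
    rw [hG]
    simp only [id]
    field_simp
    ring
  have hpos : 0 < -d + ρ * ((1 - d) / (1 - ρ)) * (1 - G x) := by
    have h3 : ((1 - ρ) * d) / ((1 - d) * ρ) < 1 - G x := by linarith
    have hK : 0 < ρ * ((1 - d) / (1 - ρ)) := by positivity
    have h4 := mul_lt_mul_of_pos_left h3 hK
    have h5 : ρ * ((1 - d) / (1 - ρ)) * (((1 - ρ) * d) / ((1 - d) * ρ)) = d := by
      field_simp
    linarith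
  have hsl := (hasDerivAt_iff_tendsto_slope.1 hder).mono_left
    (nhdsWithin_mono x (fun y (hy : y ∈ Ioi x) => ne_of_gt hy))
  obtain ⟨y, hy, hyb⟩ := ((hsl.eventually (lt_mem_nhds hpos)).and
    (Ioo_mem_nhdsGT hxb)).exists
  have hyE : (y : EReal) < (xbar : EReal) := by exact_mod_cast hyb.2
  refine ⟨y, hyb.1, hyE.trans hxbar.2, ?_⟩
  rw [slope_def_field] at hy
  have hyx : 0 < y - x := sub_pos.2 hyb.1
  have h6 := (div_pos_iff_of_pos_right hyx).1 hy
  have h7 : x - d * x + ρ * ((1 - F x) / (1 - F x)) * ((1 - d) / (1 - ρ)) * x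
      = ((1 - d) / (1 - ρ)) * x := by
    rw [div_self hS.ne']
    field_simp
    ring
  linarith
end

section
/- Assume F is differentiable on (0,u) with derivative f and Assumption 1 holds. Let ρ ∈ (0,1), α ∈ (0,1), let d* be the unique solution in (0,ρ) of ρ·(α + d^{α+1}) = (α+1)·d, let β = (1 − (d*)^{α+1})/(1 − (d*)^α·ρ), and let x̄ ∈ (0,u) satisfy G(x̄) = 1/(α+1). Then for every x with x̄ ≤ x < u: sup over y ∈ [x,u) and δ ∈ (0,ρ) of ( x − δ^{α+1}·y + ρ·δ^α·((1 − F(y))/(1 − F(x)))·β·y ) equals β·x, and the supremum is attained at (y,δ) = (x, d*). -/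
open Set MeasureTheory

/-- Constant demand elasticity s(d) = d^α. For states x ≥ x̄
(where G(x̄) = 1/(α+1)), the one-step Bellman supremum over repayment amounts
y ∈ [x,u) and discount rates δ ∈ (0,ρ) of
x − δ^{α+1}y + ρ δ^α ((1−F(y))/(1−F(x))) β y equals β·x, attained at
(y,δ) = (x,d*). -/
theorem stmt_16 (u : EReal) (hu : 0 < u)
    (f : ℝ → ℝ) (hf_cont : Continuous f)
    (hf_pos : ∀ x : ℝ, 0 < x → (x : EReal) < u → 0 < f x)
    (hf_zero : ∀ x : ℝ, x ≤ 0 ∨ u ≤ (x : EReal) → f x = 0)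
    (hf_prob : ∫ t : ℝ, f t = 1)
    (F : ℝ → ℝ) (hF : ∀ x : ℝ, F x = ∫ t in (0:ℝ)..x, f t)
    (hF_deriv : ∀ x : ℝ, 0 < x → (x : EReal) < u → HasDerivAt F (f x) x)
    (hF_lt : ∀ x : ℝ, (x : EReal) < u → F x < 1)
    (G : ℝ → ℝ) (hG : ∀ x : ℝ, G x = x * f x / (1 - F x))
    -- Assumption 1:
    (hG_mono : StrictMonoOn G {x : ℝ | 0 ≤ x ∧ (x : EReal) < u})
    (hG_zero : G 0 = 0)
    (hG_lim : ∀ c : ℝ, c < 1 → ∃ x : ℝ, 0 ≤ x ∧ (x : EReal) < u ∧ c < G x)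
    (ρ α : ℝ) (hρ0 : 0 < ρ) (hρ1 : ρ < 1) (hα0 : 0 < α) (hα1 : α < 1)
    (dstar : ℝ) (hdstar : 0 < dstar ∧ dstar < ρ)
    (hdstar_eq : ρ * (α + dstar ^ (α + 1)) = (α + 1) * dstar)
    (hdstar_uniq : ∀ d : ℝ, 0 < d → d < ρ → ρ * (α + d ^ (α + 1)) = (α + 1) * d →
      d = dstar)
    (β : ℝ) (hβ : β = (1 - dstar ^ (α + 1)) / (1 - dstar ^ α * ρ))
    (xbar : ℝ) (hxbar : 0 < xbar ∧ (xbar : EReal) < u)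
    (hxbar_eq : G xbar = 1 / (α + 1)) :
    ∀ x : ℝ, xbar ≤ x → (x : EReal) < u →
      IsGreatest
        {v : ℝ | ∃ y δ : ℝ, x ≤ y ∧ (y : EReal) < u ∧ 0 < δ ∧ δ < ρ ∧
          v = x - δ ^ (α + 1) * y + ρ * δ ^ α * ((1 - F y) / (1 - F x)) * β * y}
        (β * x) ∧
      x - dstar ^ (α + 1) * x + ρ * dstar ^ α * ((1 - F x) / (1 - F x)) * β * x =
        β * x := by
  intro x hx hxu
  obtain ⟨hd0, hdρ⟩ := hdstar
  obtain ⟨hb0, hbu⟩ := hxbar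
  have hx0 : 0 < x := lt_of_lt_of_le hb0 hx
  have hFx : 0 < 1 - F x := by linarith [hF_lt x hxu]
  have hDd : dstar ^ (α + 1) = dstar ^ α * dstar := by
    rw [Real.rpow_add hd0, Real.rpow_one]
  have hD0 : 0 < dstar ^ α := Real.rpow_pos_of_pos hd0 _
  have hD1 : dstar ^ α < 1 := Real.rpow_lt_one hd0.le (hdρ.trans hρ1) hα0
  have hden : 0 < 1 - dstar ^ α * ρ := by nlinarith
  have hβ' : β * (1 - dstar ^ α * ρ) = 1 - dstar ^ α * dstar := by
    rw [hβ, hDd]; field_simp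
  have hαβ : α * β = α + dstar ^ (α + 1) := by
    rw [hDd] at hdstar_eq ⊢
    apply mul_right_cancel₀ hden.ne'
    linear_combination α * hβ' + dstar ^ α * hdstar_eq
  have hρβ : ρ * β * α = (α + 1) * dstar := by
    rw [← hdstar_eq, ← hαβ]; ring
  have hβ1 : 1 < β := by
    have := Real.rpow_pos_of_pos hd0 (α + 1)
    nlinarith
  have hval : x - dstar ^ (α + 1) * x +
      ρ * dstar ^ α * ((1 - F x) / (1 - F x)) * β * x = β * x := by
    rw [div_self hFx.ne', hDd]
    linear_combination (-x) * hβ'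
  refine ⟨⟨⟨x, dstar, le_rfl, hxu, hd0, hdρ, hval.symm⟩, ?_⟩, hval⟩
  rintro v ⟨y, δ, hxy, hyu, hδ0, hδρ, rfl⟩
  have hFy : 0 < 1 - F y := by linarith [hF_lt y hyu]
  have hy0 : 0 < y := hx0.trans_le hxy
  -- monotonicity of y (1 - F y)^(α+1)
  have hz : ∀ z ∈ Icc x y, 0 < z ∧ (z : EReal) < u := fun z hz =>
    ⟨hx0.trans_le hz.1, lt_of_le_of_lt (EReal.coe_le_coe_iff.2 hz.2) hyu⟩
  have hder : ∀ z ∈ Icc x y, HasDerivAt (fun t => t * (1 - F t) ^ (α + 1))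
      (1 * (1 - F z) ^ (α + 1) + z * ((-f z) * (α + 1) * (1 - F z) ^ (α + 1 - 1))) z := by
    intro z hzm
    obtain ⟨h0, h1⟩ := hz z hzm
    have hFz : 0 < 1 - F z := by linarith [hF_lt z h1]
    exact (hasDerivAt_id z).mul
      (((hF_deriv z h0 h1).const_sub 1).rpow_const (Or.inl hFz.ne'))
  have hanti : AntitoneOn (fun t => t * (1 - F t) ^ (α + 1)) (Icc x y) := by
    apply antitoneOn_of_deriv_nonpos (convex_Icc x y)
    · exact fun z hz => (hder z hz).continuousAt.continuousWithinAt
    · intro z hz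
      exact (hder z (interior_subset hz)).differentiableAt.differentiableWithinAt
    · intro z hzi
      have hzm := interior_subset hzi
      rw [(hder z hzm).deriv]
      obtain ⟨h0, h1⟩ := hz z hzm
      have hFz : 0 < 1 - F z := by linarith [hF_lt z h1]
      have hGz : 1 / (α + 1) ≤ z * f z / (1 - F z) := by
        rw [← hxbar_eq, ← hG]
        exact hG_mono.monotoneOn ⟨hb0.le, hbu⟩ ⟨h0.le, h1⟩ (hx.trans hzm.1)
      rw [div_le_div_iff₀ (by linarith) hFz] at hGz
      have hP : 0 < (1 - F z) ^ α := Real.rpow_pos_of_pos hFz _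
      rw [add_sub_cancel_right, Real.rpow_add hFz, Real.rpow_one]
      nlinarith
  have hm := hanti (left_mem_Icc.2 hxy) (right_mem_Icc.2 hxy) hxy
  simp only at hm
  set q := (1 - F y) / (1 - F x) with hq
  have hq0 : 0 < q := div_pos hFy hFx
  have hyq : y * q ^ (α + 1) ≤ x := by
    rw [hq, Real.div_rpow hFy.le hFx.le, ← mul_div_assoc,
      div_le_iff₀ (Real.rpow_pos_of_pos hFx _)]
    exact hm
  obtain ⟨ε, hε0, rfl⟩ : ∃ ε, 0 < ε ∧ δ = q * ε :=
    ⟨δ / q, div_pos hδ0 hq0, by field_simp⟩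
  have hyoung : (α + 1) * (dstar * ε ^ α) ≤ dstar ^ (α + 1) + α * ε ^ (α + 1) := by
    have hpq : (α + 1).HolderConjugate ((α + 1) / α) := by
      rw [Real.holderConjugate_iff]
      refine ⟨by linarith, ?_⟩
      field_simp
      ring
    have h := Real.young_inequality_of_nonneg hd0.le (Real.rpow_pos_of_pos hε0 α).le hpq
    rw [← Real.rpow_mul hε0.le, mul_div_cancel₀ _ hα0.ne'] at h
    have h2 := mul_le_mul_of_nonneg_left h (by linarith : 0 ≤ α + 1)
    refine h2.trans_eq ?_
    field_simp
  have hkey : ρ * β * ε ^ α - ε ^ (α + 1) ≤ β - 1 := by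
    have : α * (ρ * β * ε ^ α - ε ^ (α + 1)) ≤ α * (β - 1) := by
      have e : α * (ρ * β * ε ^ α) = (α + 1) * (dstar * ε ^ α) := by
        linear_combination ε ^ α * hρβ
      linarith
    exact le_of_mul_le_mul_left this hα0
  have hQ : 0 < y * q ^ (α + 1) := mul_pos hy0 (Real.rpow_pos_of_pos hq0 _)
  have e : x - (q * ε) ^ (α + 1) * y + ρ * (q * ε) ^ α * q * β * y =
      x + (y * q ^ (α + 1)) * (ρ * β * ε ^ α - ε ^ (α + 1)) := by
    rw [Real.mul_rpow hq0.le hε0.le, Real.mul_rpow hq0.le hε0.le,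
      Real.rpow_add hq0, Real.rpow_one]
    ring
  rw [e]
  have h1 := mul_le_mul_of_nonneg_left hkey hQ.le
  have h2 := mul_le_mul_of_nonneg_right hyq (by linarith : 0 ≤ β - 1)
  linarith
end
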